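/- arXiv:1909.10455 — 5 statements merged into one kernel-verified Lean document; each statement's English description precedes it below -/
import Mathlib

section
/- There is a universal constant c > 0 (independent of d, n, p) with the following property. For all d, n ≥ 1 and every p with 1 ≤ p ≤ 1 + 1/log(2d), let p* = p/(p−1) (with p* = ∞ when p = 1), Θ = {θ ∈ ℝ^d : ‖θ‖_p ≤ 1}, and γ = ‖·‖_{p*}. Then there exists a hard instance (𝒳, F, 𝒫) for (Θ, γ, n) such that every estimator θ̂ : 𝒳ⁿ → ℝ^d satisfies sup_{P∈𝒫} E[f_P(θ̂(X₁,…,Xₙ)) − inf_{θ∈Θ} f_P(θ)] ≥ c · min{1, √(log(2d)/n)}. -/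
/-!
Nature draws one of the `2d` signed coordinates `v = (j, σ)`. Samples are vectors `x` of the cube
`{±1}^d` with density `1 + δ σ x_j` relative to the uniform distribution, so that the mean of `x`
is `δ σ e_j`. The loss is `F(θ, x) = (-⟨x, θ⟩ + max(0, ‖θ‖₁ - 1)) / 6`; the second term replaces
the constraint `‖θ‖₁ ≤ 1`, because estimators may leave the ball.

* Subgradients of `F(·, x)` have sup norm at most `1/3`, and `‖g‖_{p*} ≤ d^{1/p*} ‖g‖_∞ ≤ e ‖g‖_∞`
  in the range `p ≤ 1 + 1 / log (2d)` (`dualLpNorm_le_one`).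
* For `δ ≤ 1` the excess loss of `θ` over `σ e_j` is at least `(δ / 6) (1 - w_v(θ))`, where the
  weights `w_v(θ) = max(0, σ θ_j) / max(1, ‖θ‖₁)` are nonnegative and satisfy `∑ᵥ w_v(θ) ≤ 1`
  (`weight_sum_le`, `excess_ge`).
* No data-dependent weights of total mass at most one can do well on average over `v`: by the
  inequality `w L ≤ L² / (2M) + M w / 2` for the likelihood ratio `L`, the average of `E_v[w_v]` over
  `M = 2d` hypotheses is at most `(1 + δ²)ⁿ / (2M) + 1/2` (`sum_expect_weight_le`). With
  `δ = min(1, √(log(2d)/n)) / 2` this is at most `7/8`, so the average risk is at least `δ / 48`.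
-/

open Finset

/-- `S² := {(s₁²,…,s_d²) : s ∈ S}` is convex. -/
def QuadConvex {d : ℕ} (S : Set (Fin d → ℝ)) : Prop :=
  Convex ℝ ((fun (θ : Fin d → ℝ) (j : Fin d) => (θ j) ^ 2) '' S)

/-- `S` is invariant under sign flips of coordinates. -/
def OrthoSymm {d : ℕ} (S : Set (Fin d → ℝ)) : Prop :=
  ∀ θ ∈ S, ∀ ε : Fin d → ℝ, (∀ j, ε j = 1 ∨ ε j = -1) →
    (fun j => ε j * θ j) ∈ S

/-- `g` is a subgradient of `φ` at `θ`. -/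
def IsSubgradientAt {d : ℕ} (φ : (Fin d → ℝ) → ℝ) (θ g : Fin d → ℝ) : Prop :=
  ∀ θ', φ θ + ∑ j, g j * (θ' j - θ j) ≤ φ θ'

/-- Expected loss `f_P(θ) = E_{X∼P}[F(θ,X)]` over the finite sample space `Fin m`. -/
noncomputable def expLoss {d m : ℕ} (P : Fin m → ℝ)
    (F : (Fin d → ℝ) → Fin m → ℝ) (θ : Fin d → ℝ) : ℝ :=
  ∑ x, P x * F θ x

/-- Risk of the estimator `est` under `P`: the expectation over an i.i.d. sample
`X₁,…,Xₙ ∼ P` of `f_P(est X₁…Xₙ) - inf_{θ ∈ Θ} f_P(θ)`. -/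
noncomputable def risk (d n m : ℕ) (P : Fin m → ℝ)
    (F : (Fin d → ℝ) → Fin m → ℝ) (Θ : Set (Fin d → ℝ))
    (est : (Fin n → Fin m) → (Fin d → ℝ)) : ℝ :=
  ∑ xs : Fin n → Fin m, (∏ i, P (xs i)) *
    (expLoss P F (est xs) - sInf (expLoss P F '' Θ))

/-- A hard instance for `(Θ, γ, n)`: a finite sample space `Fin m`, a loss `F`
convex in `θ` with all subgradients of `γ`-norm at most 1, and a finite family
of probability distributions `P` on `Fin m`, such that every estimator has
worst-case risk at least `bound`. -/
def IsHardInstance (d n m K : ℕ) (Θ : Set (Fin d → ℝ))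
    (γ : (Fin d → ℝ) → ℝ) (F : (Fin d → ℝ) → Fin m → ℝ)
    (P : Fin K → Fin m → ℝ) (bound : ℝ) : Prop :=
  (∀ x, ConvexOn ℝ Set.univ (fun θ => F θ x)) ∧
  (∀ x θ g, IsSubgradientAt (fun t => F t x) θ g → γ g ≤ 1) ∧
  (∀ v x, 0 ≤ P v x) ∧ (∀ v, ∑ x, P v x = 1) ∧
  ∀ est : (Fin n → Fin m) → (Fin d → ℝ), ∃ v,
    bound ≤ risk d n m (P v) F Θ est

open scoped Classical

/-- The ℓ_{p*} norm where `p* = p/(p-1)`, with `p* = ∞` (sup norm) when `p = 1`. -/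
noncomputable def dualLpNorm (d : ℕ) (p : ℝ) (g : Fin d → ℝ) : ℝ :=
  if p = 1 then sSup (Set.range fun j => |g j|)
  else (∑ j, |g j| ^ (p / (p - 1))) ^ ((p - 1) / p)

/-! ### Signs and the cube -/

/-- The sign `±1` encoded by a Boolean. -/
def sgnB (b : Bool) : ℝ := if b then 1 else -1

lemma sgnB_not (b : Bool) : sgnB (!b) = -sgnB b := by cases b <;> simp [sgnB]

lemma sgnB_mul_self (b : Bool) : sgnB b * sgnB b = 1 := by cases b <;> simp [sgnB]

lemma abs_sgnB (b : Bool) : |sgnB b| = 1 := by cases b <;> simp [sgnB]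

/-- A function on the cube that is odd in coordinate `k` sums to zero. -/
lemma sum_cube_odd {d : ℕ} (k : Fin d) (f : (Fin d → Bool) → ℝ)
    (hf : ∀ b, f (Function.update b k (!b k)) = -f b) : ∑ b, f b = 0 := by
  have hinv : Function.Involutive
      (fun b : Fin d → Bool => Function.update b k (!b k)) := by
    intro b
    simp
  have h := Equiv.sum_comp hinv.toPerm f
  simp only [Function.Involutive.coe_toPerm, hf, Finset.sum_neg_distrib] at h
  linarith

lemma sum_cube_sgn {d : ℕ} (k : Fin d) : ∑ b : Fin d → Bool, sgnB (b k) = 0 :=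
  sum_cube_odd k _ fun b => by simp [sgnB_not]

lemma sum_cube_sgn_mul {d : ℕ} (j k : Fin d) :
    ∑ b : Fin d → Bool, sgnB (b j) * sgnB (b k) = if j = k then 2 ^ d else 0 := by
  split_ifs with h
  · subst h
    simp [sgnB_mul_self]
  · refine sum_cube_odd k _ fun b => ?_
    simp [Function.update_of_ne h, sgnB_not]

/-- Probability of the cube point `b` under hypothesis `v = (j, σ)`:
the density `1 + δ σ b_j` relative to the uniform distribution. -/
noncomputable def cubeP {d : ℕ} (δ : ℝ) (v : Fin d × Bool) (b : Fin d → Bool) : ℝ :=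
  (1 + δ * (sgnB v.2 * sgnB (b v.1))) / 2 ^ d

lemma cubeP_nonneg {d : ℕ} {δ : ℝ} (h0 : 0 ≤ δ) (h1 : δ ≤ 1) (v : Fin d × Bool)
    (b : Fin d → Bool) : 0 ≤ cubeP δ v b := by
  unfold cubeP
  have : |sgnB v.2 * sgnB (b v.1)| = 1 := by rw [abs_mul, abs_sgnB, abs_sgnB, one_mul]
  have h2 := neg_abs_le (sgnB v.2 * sgnB (b v.1))
  rw [this] at h2
  apply div_nonneg _ (by positivity)
  nlinarith

lemma cubeP_sum {d : ℕ} (δ : ℝ) (v : Fin d × Bool) : ∑ b, cubeP δ v b = 1 := by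
  unfold cubeP
  rw [← Finset.sum_div, Finset.sum_add_distrib, ← Finset.mul_sum, ← Finset.mul_sum, sum_cube_sgn]
  simp

lemma cubeP_mean {d : ℕ} (δ : ℝ) (v : Fin d × Bool) (k : Fin d) :
    ∑ b, cubeP δ v b * sgnB (b k) = if v.1 = k then δ * sgnB v.2 else 0 := by
  have : ∀ b : Fin d → Bool, cubeP δ v b * sgnB (b k) =
      (sgnB (b k) + δ * sgnB v.2 * (sgnB (b v.1) * sgnB (b k))) / 2 ^ d := by
    intro b; unfold cubeP; ring
  simp only [this]
  rw [← Finset.sum_div, Finset.sum_add_distrib, ← Finset.mul_sum, sum_cube_sgn, sum_cube_sgn_mul]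
  split_ifs <;> simp

/-- The second moment of the likelihood ratio against the uniform distribution. -/
lemma cubeP_chi {d : ℕ} (δ : ℝ) (v : Fin d × Bool) :
    (2 : ℝ) ^ d * ∑ b, cubeP δ v b ^ 2 = 1 + δ ^ 2 := by
  have : ∀ b : Fin d → Bool, cubeP δ v b ^ 2 =
      ((1 + δ ^ 2) + 2 * δ * sgnB v.2 * sgnB (b v.1)) / (2 ^ d * 2 ^ d) := by
    intro b
    unfold cubeP
    rw [div_pow, sq ((2 : ℝ) ^ d)]
    congr 1
    have h1 := sgnB_mul_self v.2
    have h2 := sgnB_mul_self (b v.1)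
    linear_combination δ ^ 2 * (sgnB (b v.1) * sgnB (b v.1)) * h1 + δ ^ 2 * h2
  simp only [this]
  rw [← Finset.sum_div, Finset.sum_add_distrib, ← Finset.mul_sum, sum_cube_sgn]
  simp
  field_simp

/-! ### The testing bound -/

/-- If `M` hypotheses have likelihood ratio of second moment `A` per sample against the uniform
distribution on `Fin m`, then data-dependent weights of total mass at most one collect
total expectation at most `(Aⁿ + M) / 2`. -/
lemma sum_expect_weight_le {V : Type*} [Fintype V] [Nonempty V] {m n : ℕ} (hm : 0 < m)
    (P : V → Fin m → ℝ) (A : ℝ)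
    (hA : ∀ v, (m : ℝ) * ∑ x, P v x ^ 2 = A)
    (w : (Fin n → Fin m) → V → ℝ) (hw0 : ∀ xs v, 0 ≤ w xs v) (hw1 : ∀ xs, ∑ v, w xs v ≤ 1) :
    ∑ v, ∑ xs : Fin n → Fin m, (∏ i, P v (xs i)) * w xs v
      ≤ (A ^ n + Fintype.card V) / 2 := by
  set M : ℝ := (Fintype.card V : ℝ) with hM
  have hMpos : 0 < M := by rw [hM]; exact_mod_cast Fintype.card_pos
  have hmR : (0 : ℝ) < (m : ℝ) ^ n := by positivity
  have hpt : ∀ v, ∀ xs : Fin n → Fin m, (∏ i, P v (xs i)) * w xs v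
      ≤ (m : ℝ) ^ n / (2 * M) * (∏ i, P v (xs i) ^ 2) + M / (2 * (m : ℝ) ^ n) * w xs v := by
    intro v xs
    rw [Finset.prod_pow]
    set q := ∏ i, P v (xs i)
    have h0 := hw0 xs v
    have h1 : w xs v ≤ 1 :=
      (Finset.single_le_sum (fun u _ => hw0 xs u) (Finset.mem_univ v)).trans (hw1 xs)
    have hsq : q ≤ (m : ℝ) ^ n / (2 * M) * q ^ 2 + M / (2 * (m : ℝ) ^ n) := by
      have : (m : ℝ) ^ n / (2 * M) * q ^ 2 + M / (2 * (m : ℝ) ^ n) - q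
          = ((m : ℝ) ^ n * q - M) ^ 2 / (2 * M * (m : ℝ) ^ n) := by
        field_simp; ring
      have h2 : 0 ≤ ((m : ℝ) ^ n * q - M) ^ 2 / (2 * M * (m : ℝ) ^ n) := by positivity
      linarith
    have h3 : 0 ≤ (m : ℝ) ^ n / (2 * M) * q ^ 2 := by positivity
    nlinarith [mul_le_mul_of_nonneg_right hsq h0, mul_le_mul_of_nonneg_left h1 h3]
  have hsum1 : ∀ v, ∑ xs : Fin n → Fin m, (m : ℝ) ^ n / (2 * M) * (∏ i, P v (xs i) ^ 2)
      = A ^ n / (2 * M) := by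
    intro v
    rw [← Finset.mul_sum, ← Fintype.sum_pow (fun x => P v x ^ 2) n, ← hA v, mul_pow]
    ring
  have hsum2 : ∑ v, ∑ xs : Fin n → Fin m, M / (2 * (m : ℝ) ^ n) * w xs v ≤ M / 2 := by
    rw [Finset.sum_comm]
    calc ∑ xs : Fin n → Fin m, ∑ v, M / (2 * (m : ℝ) ^ n) * w xs v
        ≤ ∑ xs : Fin n → Fin m, M / (2 * (m : ℝ) ^ n) := by
          refine Finset.sum_le_sum fun xs _ => ?_
          rw [← Finset.mul_sum]
          exact mul_le_of_le_one_right (by positivity) (hw1 xs)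
      _ = M / 2 := by
          simp
          field_simp
  calc ∑ v, ∑ xs : Fin n → Fin m, (∏ i, P v (xs i)) * w xs v
      ≤ ∑ v, ∑ xs : Fin n → Fin m, ((m : ℝ) ^ n / (2 * M) * (∏ i, P v (xs i) ^ 2)
          + M / (2 * (m : ℝ) ^ n) * w xs v) :=
        Finset.sum_le_sum fun v _ => Finset.sum_le_sum fun xs _ => hpt v xs
    _ = ∑ v : V, A ^ n / (2 * M)
          + ∑ v, ∑ xs : Fin n → Fin m, M / (2 * (m : ℝ) ^ n) * w xs v := by
        simp only [Finset.sum_add_distrib, hsum1]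
    _ ≤ A ^ n / 2 + M / 2 := by
        refine add_le_add (le_of_eq ?_) hsum2
        rw [Finset.sum_const, Finset.card_univ, nsmul_eq_mul, ← hM]
        field_simp
    _ = _ := by ring

/-! ### The loss -/

/-- The loss at the cube point `b`. -/
noncomputable def cubeLoss {d : ℕ} (θ : Fin d → ℝ) (b : Fin d → Bool) : ℝ :=
  (1 / 6) * (-(∑ k, sgnB (b k) * θ k) + max 0 (∑ k, |θ k| - 1))

lemma cubeLoss_convex {d : ℕ} (b : Fin d → Bool) :
    ConvexOn ℝ Set.univ (fun θ : Fin d → ℝ => cubeLoss θ b) := by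
  refine ⟨convex_univ, fun x _ y _ s t hs ht hst => ?_⟩
  simp only [cubeLoss, smul_eq_mul, Pi.add_apply, Pi.smul_apply]
  have hlin : ∑ k, sgnB (b k) * (s * x k + t * y k)
      = s * ∑ k, sgnB (b k) * x k + t * ∑ k, sgnB (b k) * y k := by
    rw [Finset.mul_sum, Finset.mul_sum, ← Finset.sum_add_distrib]
    exact Finset.sum_congr rfl fun k _ => by ring
  have habs : ∑ k, |s * x k + t * y k| ≤ s * ∑ k, |x k| + t * ∑ k, |y k| := by
    rw [Finset.mul_sum, Finset.mul_sum, ← Finset.sum_add_distrib]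
    refine Finset.sum_le_sum fun k _ => (abs_add_le _ _).trans ?_
    rw [abs_mul, abs_mul, abs_of_nonneg hs, abs_of_nonneg ht]
  have hmax : max 0 (∑ k, |s * x k + t * y k| - 1)
      ≤ s * max 0 (∑ k, |x k| - 1) + t * max 0 (∑ k, |y k| - 1) := by
    have hx0 := le_max_left 0 (∑ k, |x k| - 1)
    have hx1 := le_max_right 0 (∑ k, |x k| - 1)
    have hy0 := le_max_left 0 (∑ k, |y k| - 1)
    have hy1 := le_max_right 0 (∑ k, |y k| - 1)
    refine max_le (by positivity) ?_
    nlinarith [mul_le_mul_of_nonneg_left hx1 hs, mul_le_mul_of_nonneg_left hy1 ht]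
  rw [hlin]
  linarith

/-- Moving one coordinate by `t = ±1` changes the loss by at most `1/3`. -/
lemma cubeLoss_step {d : ℕ} (b : Fin d → Bool) (θ : Fin d → ℝ) (j : Fin d) (t : ℝ)
    (ht : |t| = 1) : cubeLoss (θ + Pi.single j t) b ≤ cubeLoss θ b + 1 / 3 := by
  have hlin : ∑ k, sgnB (b k) * (θ + Pi.single j t : Fin d → ℝ) k = ∑ k, sgnB (b k) * θ k + sgnB (b j) * t := by
    simp [mul_add, Finset.sum_add_distrib, Pi.single_apply]
  have habs : ∑ k, |(θ + Pi.single j t : Fin d → ℝ) k| ≤ ∑ k, |θ k| + 1 := by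
    calc ∑ k, |(θ + Pi.single j t : Fin d → ℝ) k|
        ≤ ∑ k, (|θ k| + |(Pi.single j t : Fin d → ℝ) k|) :=
          Finset.sum_le_sum fun k _ => abs_add_le _ _
      _ = ∑ k, |θ k| + 1 := by
          rw [Finset.sum_add_distrib]
          congr 1
          rw [Finset.sum_eq_single j (fun k _ hk => by simp [hk]) (by simp)]
          simpa using ht
  have hs : |sgnB (b j) * t| = 1 := by rw [abs_mul, abs_sgnB, ht, one_mul]
  have hs' := neg_abs_le (sgnB (b j) * t)
  have hmax : max 0 (∑ k, |(θ + Pi.single j t : Fin d → ℝ) k| - 1) ≤ max 0 (∑ k, |θ k| - 1) + 1 := by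
    have h0 := le_max_left 0 (∑ k, |θ k| - 1)
    have h1 := le_max_right 0 (∑ k, |θ k| - 1)
    exact max_le (by linarith) (by linarith)
  unfold cubeLoss
  rw [hlin]
  linarith

lemma cubeLoss_subgradient {d : ℕ} (b : Fin d → Bool) (θ g : Fin d → ℝ)
    (hg : IsSubgradientAt (fun t => cubeLoss t b) θ g) (j : Fin d) : |g j| ≤ 1 / 3 := by
  have key : ∀ t : ℝ, |t| = 1 → g j * t ≤ 1 / 3 := by
    intro t ht
    have h1 := hg (θ + Pi.single j t)
    have h2 := cubeLoss_step b θ j t ht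
    have h3 : ∑ k, g k * ((θ + Pi.single j t : Fin d → ℝ) k - θ k) = g j * t := by
      simp [Pi.single_apply]
    rw [h3] at h1
    simp only at h1
    linarith
  rw [abs_le]
  constructor
  · have := key (-1) (by simp)
    linarith
  · have := key 1 (by simp)
    linarith

/-- In the range `p ≤ 1 + 1 / log (2d)` the dual norm is at most `e < 3` times the sup norm. -/
lemma dualLpNorm_le_one {d : ℕ} (hd : 1 ≤ d) {p : ℝ} (hp1 : 1 ≤ p)
    (hp : p ≤ 1 + 1 / Real.log (2 * d)) (g : Fin d → ℝ) (hg : ∀ j, |g j| ≤ 1 / 3) :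
    dualLpNorm d p g ≤ 1 := by
  unfold dualLpNorm
  split_ifs with h
  · refine Real.sSup_le ?_ zero_le_one
    rintro _ ⟨j, rfl⟩
    exact (hg j).trans (by norm_num)
  · have hp1' : 1 < p := lt_of_le_of_ne hp1 (Ne.symm h)
    have hpm : 0 < p - 1 := by linarith
    have hp0 : 0 < p := by linarith
    have hd1 : (1 : ℝ) ≤ d := by exact_mod_cast hd
    have hlog : 0 < Real.log (2 * d) := Real.log_pos (by linarith)
    have hsum : ∑ j, |g j| ^ (p / (p - 1)) ≤ d * (1 / 3 : ℝ) ^ (p / (p - 1)) := by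
      calc ∑ j, |g j| ^ (p / (p - 1)) ≤ ∑ j : Fin d, (1 / 3 : ℝ) ^ (p / (p - 1)) :=
            Finset.sum_le_sum fun j _ =>
              Real.rpow_le_rpow (abs_nonneg _) (hg j) (by positivity)
        _ = _ := by simp
    have hpow : ((1 / 3 : ℝ) ^ (p / (p - 1))) ^ ((p - 1) / p) = 1 / 3 := by
      rw [← Real.rpow_mul (by norm_num)]
      have : p / (p - 1) * ((p - 1) / p) = 1 := by field_simp
      rw [this, Real.rpow_one]
    have hdpow : (d : ℝ) ^ ((p - 1) / p) ≤ 3 := by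
      have hexp : (p - 1) / p ≤ 1 / Real.log (2 * d) :=
        (div_le_self hpm.le hp1).trans (by linarith)
      calc (d : ℝ) ^ ((p - 1) / p) ≤ (2 * d : ℝ) ^ ((p - 1) / p) :=
            Real.rpow_le_rpow (by linarith) (by linarith) (by positivity)
        _ ≤ (2 * d : ℝ) ^ (1 / Real.log (2 * d)) :=
            Real.rpow_le_rpow_of_exponent_le (by linarith) hexp
        _ = Real.exp 1 := by
            rw [Real.rpow_def_of_pos (by linarith), mul_one_div_cancel hlog.ne']
        _ ≤ 3 := Real.exp_one_lt_three.le
    calc (∑ j, |g j| ^ (p / (p - 1))) ^ ((p - 1) / p)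
        ≤ (d * (1 / 3 : ℝ) ^ (p / (p - 1))) ^ ((p - 1) / p) :=
          Real.rpow_le_rpow (Finset.sum_nonneg fun j _ => by positivity) hsum (by positivity)
      _ = (d : ℝ) ^ ((p - 1) / p) * (1 / 3) := by
          rw [Real.mul_rpow (by positivity) (by positivity), hpow]
      _ ≤ 1 := by linarith

/-! ### Excess loss and weights -/

/-- The expected loss under hypothesis `v`. -/
noncomputable def popLoss {d : ℕ} (δ : ℝ) (v : Fin d × Bool) (θ : Fin d → ℝ) : ℝ :=
  (1 / 6) * (-(δ * (sgnB v.2 * θ v.1)) + max 0 (∑ k, |θ k| - 1))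

lemma sum_cubeP_cubeLoss {d : ℕ} (δ : ℝ) (v : Fin d × Bool) (θ : Fin d → ℝ) :
    ∑ b, cubeP δ v b * cubeLoss θ b = popLoss δ v θ := by
  have h : ∀ b : Fin d → Bool, cubeP δ v b * cubeLoss θ b =
      -(1 / 6) * (∑ k, (cubeP δ v b * sgnB (b k)) * θ k)
        + cubeP δ v b * ((1 / 6) * max 0 (∑ k, |θ k| - 1)) := by
    intro b
    have : ∑ k, (cubeP δ v b * sgnB (b k)) * θ k = cubeP δ v b * ∑ k, sgnB (b k) * θ k := by
      rw [Finset.mul_sum]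
      exact Finset.sum_congr rfl fun k _ => by ring
    rw [this]
    unfold cubeLoss
    ring
  simp only [h]
  rw [Finset.sum_add_distrib, ← Finset.sum_mul, cubeP_sum, ← Finset.mul_sum, Finset.sum_comm]
  simp only [← Finset.sum_mul, cubeP_mean]
  simp only [ite_mul, zero_mul, Finset.sum_ite_eq, Finset.mem_univ, if_true]
  unfold popLoss
  ring

/-- The share of `θ` placed on the signed coordinate `v`. -/
noncomputable def weight {d : ℕ} (θ : Fin d → ℝ) (v : Fin d × Bool) : ℝ :=
  max 0 (sgnB v.2 * θ v.1) / max 1 (∑ k, |θ k|)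

lemma weight_nonneg {d : ℕ} (θ : Fin d → ℝ) (v : Fin d × Bool) : 0 ≤ weight θ v :=
  div_nonneg (le_max_left _ _) (zero_le_one.trans (le_max_left _ _))

lemma weight_sum_le {d : ℕ} (θ : Fin d → ℝ) : ∑ v, weight θ v ≤ 1 := by
  unfold weight
  have hpos : 0 < max 1 (∑ k, |θ k|) := zero_lt_one.trans_le (le_max_left _ _)
  rw [← Finset.sum_div, div_le_one hpos, Fintype.sum_prod_type]
  refine le_trans (le_of_eq ?_) (le_max_right _ _)
  refine Finset.sum_congr rfl fun k _ => ?_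
  rw [Fintype.sum_bool]
  simp only [sgnB, if_true, Bool.false_eq_true, if_false, one_mul, neg_one_mul]
  rcases le_total 0 (θ k) with h | h
  · rw [max_eq_right h, max_eq_left (by linarith), abs_of_nonneg h, add_zero]
  · rw [max_eq_left h, max_eq_right (by linarith), abs_of_nonpos h, zero_add]

lemma excess_ge {d : ℕ} {δ : ℝ} (h0 : 0 ≤ δ) (h1 : δ ≤ 1) (v : Fin d × Bool) (θ : Fin d → ℝ) :
    δ / 6 * (1 - weight θ v) ≤ popLoss δ v θ + δ / 6 := by
  unfold popLoss weight
  set N := ∑ k, |θ k|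
  set s := sgnB v.2 * θ v.1
  have hM1 : 1 ≤ max 1 N := le_max_left _ _
  have hMpos : 0 < max 1 N := by linarith
  have hsN : s ≤ N := by
    have : |s| = |θ v.1| := by simp only [s]; rw [abs_mul, abs_sgnB, one_mul]
    calc s ≤ |s| := le_abs_self s
      _ = |θ v.1| := this
      _ ≤ N := Finset.single_le_sum (f := fun k => |θ k|) (fun k _ => abs_nonneg _)
          (Finset.mem_univ v.1)
  have hmax : max 0 (N - 1) = max 1 N - 1 := by
    rcases le_total N 1 with h | h
    · rw [max_eq_left h, max_eq_left (by linarith)]; ring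
    · rw [max_eq_right h, max_eq_right (by linarith)]
  rw [hmax]
  -- `1 - w ≤ max(1, N) (1 - w) ≤ max(1, N) - s`, because `w ≤ 1`
  have hw : 1 - max 0 s / max 1 N ≤ max 1 N - s := by
    have hw1 : max 0 s / max 1 N ≤ 1 := by
      rw [div_le_one hMpos]
      exact max_le (by linarith) (hsN.trans (le_max_right _ _))
    rcases le_total 0 s with h | h
    · rw [max_eq_right h] at hw1 ⊢
      have : s = max 1 N * (s / max 1 N) := by field_simp
      nlinarith
    · rw [max_eq_left h]
      simp only [zero_div]
      linarith
  nlinarith [mul_le_mul_of_nonneg_left hw h0, mul_nonneg (sub_nonneg.2 h1) (sub_nonneg.2 hM1)]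

/-- The signed basis vector `σ e_j` lies in the `ℓ_p` ball and has expected loss `-δ/6`, hence it
bounds the infimum from above; the infimum is not a junk value by `excess_ge`. -/
lemma sInf_popLoss_le {d : ℕ} {δ : ℝ} (h0 : 0 ≤ δ) (h1 : δ ≤ 1) (v : Fin d × Bool) {p : ℝ}
    (hp : 1 ≤ p) :
    sInf (popLoss δ v '' {θ : Fin d → ℝ | (∑ j, |θ j| ^ p) ^ (1 / p) ≤ 1}) ≤ -(δ / 6) := by
  have hsum : ∀ q : ℝ, q ≠ 0 →
      ∑ j, |(Pi.single v.1 (sgnB v.2) : Fin d → ℝ) j| ^ q = 1 := by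
    intro q hq
    rw [Finset.sum_eq_single v.1 (fun k _ hk => by simp [hk, Real.zero_rpow hq]) (by simp)]
    simp [abs_sgnB]
  refine csInf_le ⟨-(δ / 6), ?_⟩ ⟨Pi.single v.1 (sgnB v.2), ?_, ?_⟩
  · rintro _ ⟨θ, -, rfl⟩
    have h2 := excess_ge h0 h1 v θ
    have h3 : weight θ v ≤ 1 :=
      (Finset.single_le_sum (fun u _ => weight_nonneg θ u) (Finset.mem_univ v)).trans
        (weight_sum_le θ)
    have : 0 ≤ δ / 6 * (1 - weight θ v) := mul_nonneg (by positivity) (by linarith)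
    linarith
  · simp only [Set.mem_ofPred_eq]
    rw [hsum p (by linarith), Real.one_rpow]
  · have h4 := hsum 1 one_ne_zero
    simp only [Real.rpow_one] at h4
    unfold popLoss
    rw [h4]
    simp only [Pi.single_eq_same, sgnB_mul_self]
    simp
    ring

/-- The choice `δ = min(1, √(log M / n)) / 2` keeps the `n`-sample second moment below `3M/4`. -/
lemma second_moment_le {M : ℝ} (hM : 2 ≤ M) {n : ℕ} (hn : 1 ≤ n) {δ : ℝ}
    (hδ : δ = min 1 (Real.sqrt (Real.log M / n)) / 2) : (1 + δ ^ 2) ^ n ≤ 3 / 4 * M := by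
  have hnR : (0 : ℝ) < n := by exact_mod_cast hn
  have hlog : 0 ≤ Real.log M := Real.log_nonneg (by linarith)
  have hsq0 := Real.sqrt_nonneg (Real.log M / n)
  have hmin0 : 0 ≤ min 1 (Real.sqrt (Real.log M / n)) := le_min zero_le_one hsq0
  have hδ2 : δ ^ 2 * n ≤ Real.log M / 4 := by
    have h1 : min 1 (Real.sqrt (Real.log M / n)) ^ 2 ≤ Real.log M / n := by
      calc _ ≤ Real.sqrt (Real.log M / n) ^ 2 := pow_le_pow_left₀ hmin0 (min_le_right _ _) 2
        _ = _ := Real.sq_sqrt (by positivity)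
    rw [le_div_iff₀ hnR] at h1
    rw [hδ, div_pow]
    linarith
  have hA : (1 + δ ^ 2) ^ n ≤ Real.exp (Real.log M / 2) := by
    calc (1 + δ ^ 2) ^ n ≤ Real.exp (δ ^ 2) ^ n := by
          refine pow_le_pow_left₀ (by positivity) ?_ n
          linarith [Real.add_one_le_exp (δ ^ 2)]
      _ = Real.exp (δ ^ 2 * n) := by rw [← Real.exp_nat_mul, mul_comm]
      _ ≤ _ := Real.exp_le_exp.2 (by linarith)
  have hsq : Real.exp (Real.log M / 2) ^ 2 = M := by
    rw [← Real.exp_nat_mul, Nat.cast_ofNat, mul_div_cancel₀ _ two_ne_zero,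
      Real.exp_log (by linarith)]
  refine hA.trans (abs_le_of_sq_le_sq' ?_ (by positivity)).2
  rw [hsq]
  nlinarith

theorem statement12 : ∃ c : ℝ, 0 < c ∧
    ∀ (d n : ℕ), 1 ≤ d → 1 ≤ n →
    ∀ p : ℝ, 1 ≤ p → p ≤ 1 + 1 / Real.log (2 * d) →
    ∃ (m K : ℕ) (F : (Fin d → ℝ) → Fin m → ℝ) (P : Fin K → Fin m → ℝ),
      0 < m ∧ 0 < K ∧
      IsHardInstance d n m K
        {θ : Fin d → ℝ | (∑ j, |θ j| ^ p) ^ (1 / p) ≤ 1}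
        (dualLpNorm d p) F P
        (c * min 1 (Real.sqrt (Real.log (2 * d) / n))) := by
  refine ⟨1 / 96, by norm_num, ?_⟩
  intro d n hd hn p hp1 hp
  have hd1 : (1 : ℝ) ≤ d := by exact_mod_cast hd
  set r := min 1 (Real.sqrt (Real.log (2 * d) / n)) with hr
  have hr0 : 0 ≤ r := le_min zero_le_one (Real.sqrt_nonneg _)
  have hr1 : r ≤ 1 := min_le_left _ _
  set δ := r / 2 with hδ
  have h0 : 0 ≤ δ := by positivity
  have h1 : δ ≤ 1 := by linarith
  let eX := (Fintype.equivFin (Fin d → Bool)).symm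
  let eV := (Fintype.equivFin (Fin d × Bool)).symm
  have : Nonempty (Fin d × Bool) := ⟨(⟨0, hd⟩, true)⟩
  have hcard : (Fintype.card (Fin d → Bool) : ℝ) = 2 ^ d := by simp
  have hcardV : (Fintype.card (Fin d × Bool) : ℝ) = 2 * d := by simp [mul_comm]
  have hpop : ∀ v : Fin d × Bool,
      expLoss (fun x => cubeP δ v (eX x)) (fun θ x => cubeLoss θ (eX x)) = popLoss δ v := by
    intro v
    funext θ
    rw [← sum_cubeP_cubeLoss]
    exact Equiv.sum_comp eX fun b => cubeP δ v b * cubeLoss θ b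
  have hPsum : ∀ v : Fin d × Bool, ∑ x, cubeP δ v (eX x) = 1 := fun v =>
    (Equiv.sum_comp eX fun b => cubeP δ v b).trans (cubeP_sum δ v)
  refine ⟨Fintype.card (Fin d → Bool), Fintype.card (Fin d × Bool),
    fun θ x => cubeLoss θ (eX x), fun v x => cubeP δ (eV v) (eX x),
    Fintype.card_pos, Fintype.card_pos, fun x => cubeLoss_convex _,
    fun x θ g hg => dualLpNorm_le_one hd hp1 hp g (cubeLoss_subgradient _ θ g hg),
    fun v x => cubeP_nonneg h0 h1 _ _, fun v => hPsum _, ?_⟩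
  intro est
  -- `W v` is the expected weight that the estimator puts on the true hypothesis `v`.
  let W : Fin d × Bool → ℝ := fun v => ∑ xs : Fin n → Fin (Fintype.card (Fin d → Bool)),
    (∏ i, cubeP δ v (eX (xs i))) * weight (est xs) v
  have hW : ∑ v, W v ≤ 7 / 8 * (2 * d) := by
    have h2 := sum_expect_weight_le (n := n) (Fintype.card_pos (α := Fin d → Bool))
      (fun v x => cubeP δ v (eX x)) (1 + δ ^ 2)
      (fun v => by
        rw [hcard, ← cubeP_chi δ v]
        congr 1
        exact Equiv.sum_comp eX fun b => cubeP δ v b ^ 2)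
      (fun xs v => weight (est xs) v) (fun xs v => weight_nonneg _ _) (fun xs => weight_sum_le _)
    have h3 := second_moment_le (M := 2 * d) (by linarith) hn hδ
    rw [hcardV] at h2
    simp only [W]
    linarith
  obtain ⟨v, hv⟩ : ∃ v, W v ≤ 7 / 8 := by
    by_contra! hcon
    have h4 : ∑ v : Fin d × Bool, (7 / 8 : ℝ) < ∑ v, W v :=
      Finset.sum_lt_sum_of_nonempty Finset.univ_nonempty fun v _ => hcon v
    rw [Finset.sum_const, Finset.card_univ, nsmul_eq_mul, hcardV] at h4
    linarith
  refine ⟨eV.symm v, ?_⟩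
  unfold risk
  simp only [Equiv.apply_symm_apply, hpop]
  have hone : ∑ xs : Fin n → Fin (Fintype.card (Fin d → Bool)),
      ∏ i, cubeP δ v (eX (xs i)) = 1 := by
    rw [← Fintype.sum_pow (fun x => cubeP δ v (eX x)) n, hPsum, one_pow]
  calc 1 / 96 * r = δ / 6 * (1 - 7 / 8) := by rw [hδ]; ring
    _ ≤ δ / 6 * (1 - W v) := by gcongr
    _ = ∑ xs : Fin n → Fin (Fintype.card (Fin d → Bool)),
        (∏ i, cubeP δ v (eX (xs i))) * (δ / 6 * (1 - weight (est xs) v)) := by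
        conv_lhs => rw [← hone]
        simp only [W]
        rw [← Finset.sum_sub_distrib, Finset.mul_sum]
        exact Finset.sum_congr rfl fun xs _ => by ring
    _ ≤ _ := by
        refine Finset.sum_le_sum fun xs _ => mul_le_mul_of_nonneg_left ?_
          (Finset.prod_nonneg fun i _ => cubeP_nonneg h0 h1 _ _)
        have h5 := excess_ge h0 h1 v (est xs)
        have h6 := sInf_popLoss_le h0 h1 v hp1
        linarith
end

section
/- There is a universal constant c > 0 (independent of d, n, p) with the following property. For all d, n ≥ 1 and every p with 1 + 1/log(2d) < p ≤ 2, let p* = p/(p−1), Θ = {θ ∈ ℝ^d : ‖θ‖_p ≤ 1}, and γ = ‖·‖_{p*}. Then there exists a hard instance (𝒳, F, 𝒫) for (Θ, γ, n) such that every estimator θ̂ : 𝒳ⁿ → ℝ^d satisfies sup_{P∈𝒫} E[f_P(θ̂(X₁,…,Xₙ)) − inf_{θ∈Θ} f_P(θ)] ≥ c · min{1, 1/√(n(p−1))}. -/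
/-!
The lower bound is a testing argument with `D ≈ exp (1 / (p - 1)) / 2` hypotheses, where `D ≤ d`
by the assumption on `p` and `D ≥ 2`.

Fix a set `A` of `D` coordinates. A data point is a uniformly random sign vector, tilted under
hypothesis `v ∈ A` so that only coordinate `v` is biased: its density with respect to the uniform
law is `1 + 4 δ σ_v`. The loss is `(1/6) ∑_{j ∈ A} (|θ_j - (1 + σ_j)/2| + δ |θ_j|)`. Its
subgradients are supported on `A` with entries at most `1/3`, and `D ≤ exp (p*)`, hence their
`ℓ_{p*}` norm is at most `1` (`hardLoss_subgrad`). Under hypothesis `v` the fair coordinates are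
pulled to `0` by the deterministic term `δ |θ_j|`, whereas the bias pulls `θ_v` to `1`; so the
minimizer is the basis vector `e_v`, which lies in the unit ball, and the excess loss is at least
`(δ/6) ‖θ - e_v‖₁`, the norm being over `A` (`excess_lower`). This holds for all `θ ∈ ℝ^d`, so
estimators leaving the ball gain nothing.

An estimator with small risk would therefore identify `v`. Comparing with the uniform law through
the second moments `(1 + 16 δ²)ⁿ` of the likelihood ratios, the average success probability is at
most `7/8` as soon as `(1 + 16 δ²)ⁿ ≤ 1 + D/8` (`exists_error`). The choice
`δ = min (1, 1/√(n (p - 1))) / 16` meets this condition because `log (1 + D/8) ≥ 1 / (16 (p - 1))`.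
-/

open Finset

/-! ### Uncorrelated random signs -/

/-- Existence of balanced, pairwise uncorrelated signs: the coordinates of `{±1}^d`, transported
to `Fin (Fintype.card (Fin d → Bool))`. -/
lemma exists_signs (d : ℕ) : ∃ (m : ℕ) (σ : Fin d → Fin m → ℝ), 0 < m ∧
    (∀ j x, σ j x = 1 ∨ σ j x = -1) ∧ (∀ j, ∑ x, σ j x = 0) ∧
    (∀ j k, j ≠ k → ∑ x, σ j x * σ k x = 0) := by
  classical
  let e := Fintype.equivFin (Fin d → Bool)
  let τ : Fin d → (Fin d → Bool) → ℝ := fun j b => if b j then 1 else -1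
  have hτ : ∀ j b, τ j (Function.update b j (!b j)) = - τ j b := by
    intro j b
    cases h : b j <;> simp [τ, h]
  have hτ' : ∀ j k b, j ≠ k → τ k (Function.update b j (!b j)) = τ k b := by
    intro j k b h
    simp [τ, Function.update_of_ne h.symm]
  have hne : ∀ (j : Fin d) (b : Fin d → Bool), Function.update b j (!b j) ≠ b := by
    intro j b h
    have := congrFun h j
    simp at this
  have hinv : ∀ (j : Fin d) (b : Fin d → Bool),
      Function.update (Function.update b j (!b j)) j
        (!(Function.update b j (!b j)) j) = b := by
    intro j b
    simp
  refine ⟨_, fun j x => τ j (e.symm x), Fintype.card_pos, ?_, ?_, ?_⟩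
  · intro j x
    by_cases h : e.symm x j = true <;> simp [τ, h]
  · intro j
    rw [Equiv.sum_comp e.symm (fun b => τ j b)]
    refine Finset.sum_involution (fun b _ => Function.update b j (!b j)) ?_ ?_ ?_ ?_
    · intro b _
      rw [hτ]; ring
    · intro b _ _
      exact hne j b
    · intro b _
      simp
    · intro b _
      exact hinv j b
  · intro j k hjk
    rw [Equiv.sum_comp e.symm (fun b => τ j b * τ k b)]
    refine Finset.sum_involution (fun b _ => Function.update b j (!b j)) ?_ ?_ ?_ ?_
    · intro b _
      rw [hτ, hτ' j k b hjk]; ring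
    · intro b _ _
      exact hne j b
    · intro b _
      simp
    · intro b _
      exact hinv j b

/-! ### Testing many hypotheses -/

/-- Testing lower bound: no decision rule `s` (with `s xs v ∈ {0,1}` telling whether `v` is
selected, at most one `v` being selected) identifies all the hypotheses `v ∈ A`, where under
`v` the density with respect to the uniform law is `1 + t σ_v`. The proof compares with the
uniform law, using only the second moments `(1 + t²)ⁿ` of the likelihood ratios. -/
lemma exists_error {d n m : ℕ} (hm : 0 < m) (σ : Fin d → Fin m → ℝ)
    (hσ : ∀ j x, σ j x = 1 ∨ σ j x = -1) (hσ0 : ∀ j, ∑ x, σ j x = 0)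
    (A : Finset (Fin d)) (hA : 2 ≤ #A) (t : ℝ)
    (hM : (1 + t ^ 2) ^ n ≤ 1 + (#A : ℝ) / 8)
    (s : (Fin n → Fin m) → Fin d → ℝ) (hs : ∀ xs v, s xs v = 0 ∨ s xs v = 1)
    (hs1 : ∀ xs, ∑ v ∈ A, s xs v ≤ 1) :
    ∃ v ∈ A, 1 / 8 ≤ ∑ xs : Fin n → Fin m,
      (∏ i, (1 + t * σ v (xs i)) / m) * (1 - s xs v) := by
  set D : ℝ := (#A : ℝ) with hD
  have hD2 : (2 : ℝ) ≤ D := by rw [hD]; exact_mod_cast hA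
  have hm' : (0 : ℝ) < m := by exact_mod_cast hm
  set N : ℝ := (m : ℝ) ^ n with hN
  have hNpos : 0 < N := by positivity
  set L : Fin d → (Fin n → Fin m) → ℝ := fun v xs => ∏ i, (1 + t * σ v (xs i)) with hL
  have hprod : ∀ v (xs : Fin n → Fin m), (∏ i, (1 + t * σ v (xs i)) / m) = L v xs / N := by
    intro v xs
    simp [hL, hN, Finset.prod_div_distrib]
  have hL1 : ∀ v, ∑ xs, L v xs = N := by
    intro v
    simp only [hL]
    rw [← Fintype.sum_pow (fun x => 1 + t * σ v x) n, Finset.sum_add_distrib, ← Finset.mul_sum,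
      hσ0]
    simp [hN]
  have hL2 : ∀ v, ∑ xs, L v xs ^ 2 = N * (1 + t ^ 2) ^ n := by
    intro v
    simp only [hL, ← Finset.prod_pow]
    rw [← Fintype.sum_pow (fun x => (1 + t * σ v x) ^ 2) n]
    have : ∀ x, (1 + t * σ v x) ^ 2 = (1 + t ^ 2) + 2 * t * σ v x := by
      intro x
      rcases hσ v x with h | h <;> rw [h] <;> ring
    simp only [this]
    rw [Finset.sum_add_distrib, ← Finset.mul_sum, hσ0]
    simp only [hN, Finset.sum_const, Finset.card_univ, Fintype.card_fin, nsmul_eq_mul, mul_zero,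
      add_zero, mul_pow]
  have hcard : ∑ _xs : Fin n → Fin m, (1 : ℝ) = N := by simp [hN]
  have hvar : ∀ v, ∑ xs, (L v xs - 1) ^ 2 = N * ((1 + t ^ 2) ^ n - 1) := by
    intro v
    have : ∀ xs, (L v xs - 1) ^ 2 = L v xs ^ 2 - 2 * L v xs + 1 := fun xs => by ring
    simp only [this]
    rw [Finset.sum_add_distrib, Finset.sum_sub_distrib, ← Finset.mul_sum, hL1, hL2, hcard]
    ring
  have hpt : ∀ xs, ∑ v ∈ A, L v xs * s xs v ≤ 1 + D / 4 + ∑ v ∈ A, (L v xs - 1) ^ 2 / D := by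
    intro xs
    have h1 : ∀ v ∈ A, L v xs * s xs v ≤ (1 + D / 4) * s xs v + (L v xs - 1) ^ 2 / D := by
      intro v _
      have h2 : (L v xs - 1) * s xs v ≤ D / 4 * s xs v ^ 2 + (L v xs - 1) ^ 2 / D := by
        have : D / 4 * s xs v ^ 2 + (L v xs - 1) ^ 2 / D - (L v xs - 1) * s xs v
            = ((L v xs - 1) - D / 2 * s xs v) ^ 2 / D := by
          field_simp; ring
        have h3 : 0 ≤ ((L v xs - 1) - D / 2 * s xs v) ^ 2 / D := by positivity
        linarith
      have h4 : s xs v ^ 2 = s xs v := by rcases hs xs v with h | h <;> rw [h] <;> norm_num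
      rw [h4] at h2
      linarith
    calc _ ≤ ∑ v ∈ A, ((1 + D / 4) * s xs v + (L v xs - 1) ^ 2 / D) := Finset.sum_le_sum h1
      _ = (1 + D / 4) * ∑ v ∈ A, s xs v + ∑ v ∈ A, (L v xs - 1) ^ 2 / D := by
          rw [Finset.sum_add_distrib, Finset.mul_sum]
      _ ≤ _ := by
          have := mul_le_mul_of_nonneg_left (hs1 xs) (by positivity : 0 ≤ 1 + D / 4)
          linarith
  have htot : ∑ v ∈ A, ∑ xs, L v xs * s xs v ≤ 7 / 8 * D * N := by
    rw [Finset.sum_comm]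
    calc _ ≤ ∑ xs, (1 + D / 4 + ∑ v ∈ A, (L v xs - 1) ^ 2 / D) :=
          Finset.sum_le_sum fun xs _ => hpt xs
      _ = (1 + D / 4) * N + ∑ v ∈ A, (∑ xs, (L v xs - 1) ^ 2) / D := by
          rw [Finset.sum_add_distrib, Finset.sum_comm]
          congr 1
          · rw [← hcard, Finset.mul_sum]; simp
          · simp only [Finset.sum_div]
      _ = (1 + D / 4) * N + N * ((1 + t ^ 2) ^ n - 1) := by
          simp only [hvar]
          rw [Finset.sum_const, nsmul_eq_mul, ← hD]
          field_simp
      _ ≤ _ := by nlinarith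
  by_contra! hcon
  have hlt : ∑ v ∈ A, ∑ xs : Fin n → Fin m, (∏ i, (1 + t * σ v (xs i)) / m) * (1 - s xs v)
      < ∑ v ∈ A, (1 / 8 : ℝ) := by
    refine Finset.sum_lt_sum_of_nonempty (Finset.card_pos.mp (by omega)) hcon
  have heq : ∑ v ∈ A, ∑ xs : Fin n → Fin m, (∏ i, (1 + t * σ v (xs i)) / m) * (1 - s xs v)
      = D - (∑ v ∈ A, ∑ xs, L v xs * s xs v) / N := by
    have : ∀ v ∈ A, ∑ xs : Fin n → Fin m, (∏ i, (1 + t * σ v (xs i)) / m) * (1 - s xs v)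
        = 1 - (∑ xs, L v xs * s xs v) / N := by
      intro v _
      have h5 : ∀ xs : Fin n → Fin m, (∏ i, (1 + t * σ v (xs i)) / m) * (1 - s xs v)
          = L v xs / N - L v xs * s xs v / N := by
        intro xs; rw [hprod]; ring
      simp only [h5]
      rw [Finset.sum_sub_distrib, ← Finset.sum_div, ← Finset.sum_div, hL1, div_self hNpos.ne']
    rw [Finset.sum_congr rfl this, Finset.sum_sub_distrib, ← Finset.sum_div]
    simp [hD]
  rw [heq, Finset.sum_const, nsmul_eq_mul, ← hD] at hlt
  have : (∑ v ∈ A, ∑ xs, L v xs * s xs v) / N ≤ 7 / 8 * D := by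
    rw [div_le_iff₀ hNpos]; exact htot
  linarith

/-! ### The hard loss and its excess risk -/

/-- The hard loss: for a sign vector `(σ_j(x))_j` it equals
`(1/6) ∑_{j ∈ A} (|θ_j - (1 + σ_j(x))/2| + δ |θ_j|)`, written as a convex combination of the two
possible values of `|θ_j - (1 + σ_j(x))/2|`. -/
noncomputable def hardLoss {d m : ℕ} (σ : Fin d → Fin m → ℝ) (A : Finset (Fin d)) (δ : ℝ)
    (θ : Fin d → ℝ) (x : Fin m) : ℝ :=
  1 / 6 * ∑ j ∈ A, ((1 + σ j x) / 2 * |θ j - 1| + (1 - σ j x) / 2 * |θ j| + δ * |θ j|)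

lemma hardLoss_convex {d m : ℕ} (σ : Fin d → Fin m → ℝ)
    (hσ : ∀ j x, σ j x = 1 ∨ σ j x = -1) (A : Finset (Fin d)) {δ : ℝ} (hδ : 0 ≤ δ) (x : Fin m) :
    ConvexOn ℝ Set.univ (fun θ => hardLoss σ A δ θ x) := by
  refine ⟨convex_univ, ?_⟩
  intro θ _ η _ a b ha hb hab
  simp only [hardLoss, smul_eq_mul, Pi.add_apply, Pi.smul_apply]
  rw [mul_left_comm a, mul_left_comm b, ← mul_add, Finset.mul_sum (a := a), Finset.mul_sum (a := b),
    ← Finset.sum_add_distrib]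
  refine mul_le_mul_of_nonneg_left (Finset.sum_le_sum fun j _ => ?_) (by norm_num)
  have h0 : |a * θ j + b * η j| ≤ a * |θ j| + b * |η j| := by
    refine (abs_add_le _ _).trans ?_
    rw [abs_mul, abs_mul, abs_of_nonneg ha, abs_of_nonneg hb]
  have h1 : |a * θ j + b * η j - 1| ≤ a * |θ j - 1| + b * |η j - 1| := by
    have : a * θ j + b * η j - 1 = a * (θ j - 1) + b * (η j - 1) := by linear_combination hab
    rw [this]
    refine (abs_add_le _ _).trans ?_
    rw [abs_mul, abs_mul, abs_of_nonneg ha, abs_of_nonneg hb]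
  have h2 := mul_le_mul_of_nonneg_left h0 hδ
  rcases hσ j x with h | h <;> rw [h] <;> norm_num <;> linarith

lemma hardLoss_nonneg {d m : ℕ} (σ : Fin d → Fin m → ℝ)
    (hσ : ∀ j x, σ j x = 1 ∨ σ j x = -1) (A : Finset (Fin d)) {δ : ℝ} (hδ : 0 ≤ δ)
    (θ : Fin d → ℝ) (x : Fin m) : 0 ≤ hardLoss σ A δ θ x := by
  refine mul_nonneg (by norm_num) (Finset.sum_nonneg fun j _ => ?_)
  rcases hσ j x with h | h <;> rw [h] <;> norm_num <;> positivity

/-- Moving one coordinate by `±1` bounds that coordinate of any subgradient. -/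
lemma hardLoss_subgrad {d m : ℕ} (σ : Fin d → Fin m → ℝ)
    (hσ : ∀ j x, σ j x = 1 ∨ σ j x = -1) (A : Finset (Fin d)) {δ : ℝ} (hδ : 0 ≤ δ)
    (hδ1 : δ ≤ 1) (x : Fin m) (θ g : Fin d → ℝ)
    (hg : IsSubgradientAt (fun t => hardLoss σ A δ t x) θ g) (k : Fin d) :
    |g k| ≤ if k ∈ A then 1 / 3 else 0 := by
  classical
  have key : ∀ ε : ℝ, (ε = 1 ∨ ε = -1) → g k * ε ≤ if k ∈ A then 1 / 3 else 0 := by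
    intro ε hε
    have h := hg (Function.update θ k (θ k + ε))
    have hsum : ∑ j, g j * (Function.update θ k (θ k + ε) j - θ j) = g k * ε := by
      rw [Finset.sum_eq_single k]
      · simp
      · intro j _ hj
        simp [Function.update_of_ne hj]
      · simp
    rw [hsum] at h
    simp only [hardLoss] at h
    have hdiff : ∑ j ∈ A, ((1 + σ j x) / 2 * |Function.update θ k (θ k + ε) j - 1|
          + (1 - σ j x) / 2 * |Function.update θ k (θ k + ε) j|
          + δ * |Function.update θ k (θ k + ε) j|)
        ≤ ∑ j ∈ A, (((1 + σ j x) / 2 * |θ j - 1| + (1 - σ j x) / 2 * |θ j| + δ * |θ j|)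
          + if j = k then 2 else 0) := by
      refine Finset.sum_le_sum fun j _ => ?_
      by_cases hj : j = k
      · subst hj
        have habs : |ε| = 1 := by rcases hε with h | h <;> rw [h] <;> norm_num
        have h0 : |θ j + ε| ≤ |θ j| + 1 := by rw [← habs]; exact abs_add_le _ _
        have h1 : |θ j + ε - 1| ≤ |θ j - 1| + 1 := by
          rw [← habs, add_sub_right_comm]; exact abs_add_le _ _
        have h2 := mul_le_mul_of_nonneg_left h0 hδ
        simp only [Function.update_self, if_true]
        rcases hσ j x with h | h <;> rw [h] <;> norm_num <;> linarith
      · simp [hj]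
    rw [Finset.sum_add_distrib (g := fun j => if j = k then (2 : ℝ) else 0),
      Finset.sum_ite_eq'] at hdiff
    split_ifs at hdiff ⊢ <;> linarith
  rw [abs_le']
  have h1 := key 1 (Or.inl rfl)
  have h2 := key (-1) (Or.inr rfl)
  constructor <;> linarith

lemma expLoss_hardLoss {d m : ℕ} (hm : 0 < m) (σ : Fin d → Fin m → ℝ)
    (hσ : ∀ j x, σ j x = 1 ∨ σ j x = -1) (hσ0 : ∀ j, ∑ x, σ j x = 0)
    (hσ2 : ∀ j k, j ≠ k → ∑ x, σ j x * σ k x = 0)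
    (A : Finset (Fin d)) (δ : ℝ) (v : Fin d) (θ : Fin d → ℝ) :
    expLoss (fun x => (1 + 4 * δ * σ v x) / m) (hardLoss σ A δ) θ
      = 1 / 6 * ∑ j ∈ A, ((|θ j - 1| + |θ j|) / 2 + δ * |θ j|
          + if j = v then 2 * δ * (|θ j - 1| - |θ j|) else 0) := by
  have hm' : (m : ℝ) ≠ 0 := by positivity
  have h2 : ∀ j, ∑ x, σ v x * σ j x = if j = v then (m : ℝ) else 0 := by
    intro j
    split_ifs with h
    · subst h
      have : ∀ x, σ j x * σ j x = 1 := by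
        intro x; rcases hσ j x with h | h <;> rw [h] <;> norm_num
      simp [this]
    · exact hσ2 v j (Ne.symm h)
  simp only [expLoss, hardLoss, Finset.mul_sum]
  rw [Finset.sum_comm]
  refine Finset.sum_congr rfl fun j _ => ?_
  have h3 : ∀ x, (1 + 4 * δ * σ v x) / m * (1 / 6 * ((1 + σ j x) / 2 * |θ j - 1|
        + (1 - σ j x) / 2 * |θ j| + δ * |θ j|))
      = 1 / 6 / m * (((|θ j - 1| + |θ j|) / 2 + δ * |θ j|)
        + 4 * δ * ((|θ j - 1| + |θ j|) / 2 + δ * |θ j|) * σ v x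
        + (|θ j - 1| - |θ j|) / 2 * σ j x
        + 4 * δ * ((|θ j - 1| - |θ j|) / 2) * (σ v x * σ j x)) := by
    intro x; ring
  simp only [h3]
  rw [← Finset.mul_sum, Finset.sum_add_distrib, Finset.sum_add_distrib, Finset.sum_add_distrib,
    ← Finset.mul_sum, ← Finset.mul_sum, ← Finset.mul_sum, hσ0, hσ0, h2]
  split_ifs
  · simp; field_simp; ring
  · simp; field_simp

/-- Under hypothesis `v` the minimizer is the basis vector `e_v`, with linear growth of the
excess loss in the `ℓ₁` distance over the coordinates in `A`. -/
lemma excess_lower {d m : ℕ} (hm : 0 < m) (σ : Fin d → Fin m → ℝ)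
    (hσ : ∀ j x, σ j x = 1 ∨ σ j x = -1) (hσ0 : ∀ j, ∑ x, σ j x = 0)
    (hσ2 : ∀ j k, j ≠ k → ∑ x, σ j x * σ k x = 0)
    (A : Finset (Fin d)) {δ : ℝ} (hδ : 0 ≤ δ) (v : Fin d) (θ : Fin d → ℝ) :
    δ / 6 * ∑ j ∈ A, |θ j - Pi.single (M := fun _ => ℝ) v 1 j| ≤
      expLoss (fun x => (1 + 4 * δ * σ v x) / m) (hardLoss σ A δ) θ
      - expLoss (fun x => (1 + 4 * δ * σ v x) / m) (hardLoss σ A δ) (Pi.single v 1) := by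
  rw [expLoss_hardLoss hm σ hσ hσ0 hσ2, expLoss_hardLoss hm σ hσ hσ0 hσ2, ← mul_sub,
    ← Finset.sum_sub_distrib, div_eq_mul_one_div, mul_comm δ, mul_assoc, Finset.mul_sum]
  refine mul_le_mul_of_nonneg_left (Finset.sum_le_sum fun j _ => ?_) (by norm_num)
  have h1 : 1 ≤ |θ j - 1| + |θ j| := by
    have := abs_sub_abs_le_abs_sub (1 : ℝ) (θ j)
    rw [abs_one, abs_sub_comm] at this
    linarith
  by_cases hj : j = v
  · subst hj
    have h2 : |θ j| ≤ |θ j - 1| + 1 := by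
      have := abs_sub_abs_le_abs_sub (θ j) 1
      rw [abs_one] at this
      linarith
    have h3 := mul_le_mul_of_nonneg_left h2 hδ
    simp
    linarith
  · simp [hj]
    linarith

/-! ### Choice of parameters and the minimax bound -/

theorem statement13 : ∃ c : ℝ, 0 < c ∧
    ∀ (d n : ℕ), 1 ≤ d → 1 ≤ n →
    ∀ p : ℝ, 1 + 1 / Real.log (2 * d) < p → p ≤ 2 →
    ∃ (m K : ℕ) (F : (Fin d → ℝ) → Fin m → ℝ) (P : Fin K → Fin m → ℝ),
      0 < m ∧ 0 < K ∧
      IsHardInstance d n m K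
        {θ : Fin d → ℝ | (∑ j, |θ j| ^ p) ^ (1 / p) ≤ 1}
        (fun g => (∑ j, |g j| ^ (p / (p - 1))) ^ ((p - 1) / p)) F P
        (c * min 1 (1 / Real.sqrt (n * (p - 1)))) := by
  classical
  refine ⟨1 / 768, by norm_num, ?_⟩
  intro d n hd hn p hp hp2
  have hd' : (1 : ℝ) ≤ d := by exact_mod_cast hd
  have hn' : (1 : ℝ) ≤ n := by exact_mod_cast hn
  have hlog : 0 < Real.log (2 * d) := Real.log_pos (by linarith)
  have hp1 : 0 < p - 1 := by
    have : 0 < 1 / Real.log (2 * d) := by positivity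
    linarith
  set L : ℝ := 1 / (p - 1) with hL
  have hL1 : 1 ≤ L := by rw [hL, le_div_iff₀ hp1]; linarith
  have hLd : L < Real.log (2 * d) := by
    rw [hL, div_lt_comm₀ hp1 hlog]; linarith
  have hexpd : Real.exp L < 2 * d := (Real.lt_log_iff_exp_lt (by linarith)).mp hLd
  have hexp2 : 2 < Real.exp L := by
    have := Real.exp_one_gt_d9
    have := Real.exp_le_exp.mpr hL1
    linarith
  -- The number of active coordinates, about `exp (1 / (p - 1)) / 2`.
  set D : ℕ := ⌊Real.exp L / 2⌋₊ + 1 with hD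
  have hDd : D ≤ d := by
    rw [hD, Nat.add_one_le_iff, Nat.floor_lt (by positivity)]
    linarith
  have hD2 : 2 ≤ D := by
    have : 1 ≤ ⌊Real.exp L / 2⌋₊ := by
      rw [Nat.one_le_floor_iff]; linarith
    omega
  have hDlow : Real.exp L / 2 ≤ D := by
    rw [hD]; push_cast; exact (Nat.lt_floor_add_one _).le
  have hDup : (D : ℝ) ≤ Real.exp L := by
    have := Nat.floor_le (by positivity : 0 ≤ Real.exp L / 2)
    rw [hD]; push_cast; linarith
  obtain ⟨A, -, hA⟩ := Finset.exists_subset_card_eq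
    (s := (Finset.univ : Finset (Fin d))) (n := D) (by simpa using hDd)
  set μ : ℝ := min 1 (1 / Real.sqrt (n * (p - 1))) with hμ
  have hμ0 : 0 ≤ μ := by rw [hμ]; positivity
  have hμ1 : μ ≤ 1 := min_le_left _ _
  have hμn : n * μ ^ 2 ≤ L := by
    have h1 : μ ^ 2 ≤ (1 / Real.sqrt (n * (p - 1))) ^ 2 :=
      pow_le_pow_left₀ hμ0 (min_le_right _ _) 2
    rw [div_pow, Real.sq_sqrt (by positivity)] at h1
    calc n * μ ^ 2 ≤ n * (1 ^ 2 / (n * (p - 1))) := by gcongr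
      _ = L := by rw [hL]; field_simp
  set δ : ℝ := μ / 16 with hδ
  have hδ0 : 0 ≤ δ := by positivity
  have hδ1 : 4 * δ ≤ 1 := by rw [hδ]; linarith
  have hM : (1 + (4 * δ) ^ 2) ^ n ≤ 1 + (#A : ℝ) / 8 := by
    have h1 : (1 + (4 * δ) ^ 2) ^ n ≤ Real.exp (L / 16) := by
      calc (1 + (4 * δ) ^ 2) ^ n ≤ (Real.exp ((4 * δ) ^ 2)) ^ n := by
            gcongr
            rw [add_comm]; exact Real.add_one_le_exp _
        _ = Real.exp (n * (4 * δ) ^ 2) := by rw [← Real.exp_nat_mul]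
        _ ≤ _ := by
            refine Real.exp_le_exp.mpr ?_
            have : n * (4 * δ) ^ 2 = n * μ ^ 2 / 16 := by rw [hδ]; ring
            linarith
    -- Bernoulli's inequality at exponent `1/16`.
    have h2 : Real.exp (L / 16) ≤ 1 + (Real.exp L - 1) / 16 := by
      have h3 := one_add_mul_le_pow (a := Real.exp (L / 16) - 1)
        (by have := Real.exp_pos (L / 16); linarith) 16
      rw [add_sub_cancel, ← Real.exp_nat_mul] at h3
      push_cast at h3
      rw [mul_div_cancel₀ L (by norm_num : (16 : ℝ) ≠ 0)] at h3
      linarith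
    rw [hA]
    linarith
  obtain ⟨m, σ, hm, hσ, hσ0, hσ2⟩ := exists_signs d
  have hm' : (0 : ℝ) < m := by exact_mod_cast hm
  have hP0 : ∀ v x, 0 ≤ (1 + 4 * δ * σ v x) / m := by
    intro v x
    refine div_nonneg ?_ hm'.le
    rcases hσ v x with h | h <;> rw [h] <;> linarith
  refine ⟨m, d, hardLoss σ A δ, fun v x => (1 + 4 * δ * σ v x) / m, hm, by omega,
    hardLoss_convex σ hσ A hδ0, ?_, hP0, ?_, ?_⟩
  · intro x θ g hg
    have hgk := hardLoss_subgrad σ hσ A hδ0 (by linarith) x θ g hg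
    set q : ℝ := p / (p - 1) with hq
    have hqL : q = 1 + L := by rw [hq, hL]; field_simp; ring
    have hq0 : 0 < q := by linarith
    have hinv : (p - 1) / p = 1 / q := by rw [hq, one_div_div]
    have hsum : ∑ j, |g j| ^ q ≤ (#A : ℝ) * (1 / 3) ^ q := by
      calc ∑ j, |g j| ^ q ≤ ∑ j, (if j ∈ A then (1 / 3 : ℝ) ^ q else 0) := by
            refine Finset.sum_le_sum fun j _ => ?_
            have h := hgk j
            split_ifs at h ⊢
            · exact Real.rpow_le_rpow (abs_nonneg _) h hq0.le
            · have : |g j| = 0 := le_antisymm h (abs_nonneg _)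
              rw [this, Real.zero_rpow hq0.ne']
        _ = _ := by simp
    have hle : ∑ j, |g j| ^ q ≤ 1 := by
      refine hsum.trans ?_
      have h1 : (#A : ℝ) ≤ 3 ^ q := by
        rw [hA]
        calc (D : ℝ) ≤ Real.exp L := hDup
          _ ≤ Real.exp (1 * q) := Real.exp_le_exp.mpr (by linarith)
          _ = Real.exp 1 ^ q := Real.exp_mul _ _
          _ ≤ 3 ^ q := Real.rpow_le_rpow (Real.exp_pos _).le
              (by have := Real.exp_one_lt_d9; linarith) hq0.le
      calc (#A : ℝ) * (1 / 3) ^ q ≤ 3 ^ q * (1 / 3) ^ q := by gcongr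
        _ = 1 := by rw [← Real.mul_rpow (by norm_num) (by norm_num)]; norm_num
    simp only [hinv]
    exact Real.rpow_le_one (Finset.sum_nonneg fun j _ => by positivity) hle (by positivity)
  · intro v
    rw [← Finset.sum_div, Finset.sum_add_distrib, ← Finset.mul_sum, hσ0]
    simp [hm'.ne']
  · intro est
    set e : Fin d → Fin d → ℝ := fun v => Pi.single v 1 with he
    let dist1 : (Fin n → Fin m) → Fin d → ℝ := fun xs v => ∑ j ∈ A, |est xs j - e v j|
    let s : (Fin n → Fin m) → Fin d → ℝ := fun xs v => if dist1 xs v < 1 then 1 else 0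
    have hdist0 : ∀ xs v, 0 ≤ dist1 xs v := fun xs v => Finset.sum_nonneg fun j _ => abs_nonneg _
    have hs : ∀ xs v, s xs v = 0 ∨ s xs v = 1 := by
      intro xs v
      by_cases h : dist1 xs v < 1 <;> simp [s, h]
    -- Distinct basis vectors are at `ℓ₁` distance `2`, so the unit balls around them are disjoint.
    have hsep : ∀ xs, ∀ v ∈ A, ∀ w ∈ A, v ≠ w → 2 ≤ dist1 xs v + dist1 xs w := by
      intro xs v hv w hw hvw
      have h1 : ∑ j ∈ A, |e v j - e w j| ≤ dist1 xs v + dist1 xs w := by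
        simp only [dist1]
        rw [← Finset.sum_add_distrib]
        refine Finset.sum_le_sum fun j _ => ?_
        have := abs_sub_le (e v j) (est xs j) (e w j)
        rw [abs_sub_comm (e v j) (est xs j)] at this
        exact this
      have h2 : ∑ j ∈ ({v, w} : Finset (Fin d)), |e v j - e w j| ≤ ∑ j ∈ A, |e v j - e w j| := by
        refine Finset.sum_le_sum_of_subset_of_nonneg ?_ fun j _ _ => abs_nonneg _
        intro j hj
        simp only [Finset.mem_insert, Finset.mem_singleton] at hj
        rcases hj with h | h <;> rw [h] <;> assumption
      rw [Finset.sum_pair hvw] at h2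
      simp [he, hvw, hvw.symm] at h2
      linarith
    have hs1 : ∀ xs, ∑ v ∈ A, s xs v ≤ 1 := by
      intro xs
      by_cases h : ∃ v ∈ A, dist1 xs v < 1
      · obtain ⟨v, hv, hlt⟩ := h
        rw [Finset.sum_eq_single v]
        · rcases hs xs v with h | h <;> rw [h] <;> norm_num
        · intro w hw hwv
          have := hsep xs v hv w hw hwv.symm
          have : ¬ dist1 xs w < 1 := by linarith
          simp [s, this]
        · intro h; exact absurd hv h
      · push Not at h
        rw [Finset.sum_eq_zero]
        · norm_num
        · intro v hv
          have := h v hv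
          simp [s, this.not_gt]
    obtain ⟨v, hv, herr⟩ := exists_error hm σ hσ hσ0 A (by omega) (4 * δ) hM s hs hs1
    refine ⟨v, ?_⟩
    have hinf : sInf (expLoss (fun x => (1 + 4 * δ * σ v x) / m) (hardLoss σ A δ) ''
          {θ : Fin d → ℝ | (∑ j, |θ j| ^ p) ^ (1 / p) ≤ 1})
        ≤ expLoss (fun x => (1 + 4 * δ * σ v x) / m) (hardLoss σ A δ) (e v) := by
      refine csInf_le ⟨0, ?_⟩ ⟨e v, ?_, rfl⟩
      · rintro _ ⟨θ, -, rfl⟩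
        exact Finset.sum_nonneg fun x _ => mul_nonneg (hP0 v x) (hardLoss_nonneg σ hσ A hδ0 θ x)
      · have : ∑ j, |e v j| ^ p = 1 := by
          rw [Finset.sum_eq_single v]
          · simp [he]
          · intro j _ hj
            simp [he, hj, Real.zero_rpow (by linarith : p ≠ 0)]
          · simp
        simp [this]
    calc 1 / 768 * μ = δ / 6 * (1 / 8) := by rw [hδ]; ring
      _ ≤ δ / 6 * ∑ xs : Fin n → Fin m,
            (∏ i, (1 + 4 * δ * σ v (xs i)) / m) * (1 - s xs v) := by gcongr
      _ ≤ _ := by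
        rw [Finset.mul_sum]
        refine Finset.sum_le_sum fun xs _ => ?_
        rw [mul_left_comm]
        refine mul_le_mul_of_nonneg_left ?_ (Finset.prod_nonneg fun i _ => hP0 v _)
        have h1 := excess_lower hm σ hσ hσ0 hσ2 A hδ0 v (est xs)
        have h2 : 1 - s xs v ≤ dist1 xs v := by
          by_cases h : dist1 xs v < 1
          · simp [s, h, hdist0]
          · simp only [s, h, if_false]; linarith
        have h3 := mul_le_mul_of_nonneg_left h2 (by positivity : 0 ≤ δ / 6)
        refine h3.trans (h1.trans ?_)
        exact sub_le_sub_left hinf _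
end

section
/- Let d ≥ 1 and let n ≥ 1 be a multiple of 4. Let α ≥ 0 be a stepsize and β ∈ (0,∞)^d. Consider the online gradient descent iterates on linear losses: θ₁ = 0 and θ_{i+1} = θ_i − α g_i. Then there exist vectors g₁,…,gₙ ∈ ℝ^d with Σ_{j=1}^d β_j |g_{i,j}| ≤ 1 for all i, and a point θ ∈ ℝ^d with ‖θ‖_∞ ≤ 1, such that Σ_{i=1}^n ⟨g_i, θ_i − θ⟩ ≥ (1/2) · min{ dn/(2 Σ_{j=1}^d β_j), √(2dn)/(min_{j≤d} β_j) }. -/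
/-!
Writing `G = ∑ gᵢ`, the regret against the comparator `θ = (-1, …, -1)` equals
`∑ⱼ (Gⱼ - α/2 * (Gⱼ² - ∑ᵢ gᵢⱼ²))` (`sum_mul_prefix`, `regret_eq`).

With `b = min β = β j₀`, the first `n/2` gradients alternate between `± e_{j₀} / b`. They cancel in
`G` but contribute `α n / (4 b²)` through the squares. The last `n/2` gradients are constant,
`c (1, …, 1)` with `c ≤ 1 / ∑ β`, so `Gⱼ = x := c n / 2` and the regret is at least
`α n / (4 b²) + d (x - α x² / 2)`. If `α n / (2 ∑ β) ≤ 1`, the largest `x = n / (2 ∑ β)` is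
admissible and yields `d x / 2 = d n / (4 ∑ β)`. Otherwise `x = 1 / α` is admissible, and AM-GM
bounds `α n / (4 b²) + d / (2 α)` below by `√(2 d n) / (2 b)`.
-/

open Finset

/-- Iterates of online gradient descent with stepsize `α`:
`θ₁ = 0` and `θ_{i+1} = θ_i - α gᵢ`. -/
noncomputable def ogdIter (d n : ℕ) (α : ℝ)
    (g : Fin n → Fin d → ℝ) (i : Fin n) : Fin d → ℝ :=
  fun j => -α * ∑ l ∈ Finset.univ.filter (fun l : Fin n => l.val < i.val), g l j

lemma sum_mul_prefix (f : ℕ → ℝ) (n : ℕ) :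
    ∑ i ∈ range n, f i * ∑ l ∈ range i, f l
      = ((∑ i ∈ range n, f i) ^ 2 - ∑ i ∈ range n, f i ^ 2) / 2 := by
  induction n with
  | zero => simp
  | succ n ih => rw [sum_range_succ, ih, sum_range_succ, sum_range_succ]; ring

lemma sum_filter_lt (f : ℕ → ℝ) (n : ℕ) (i : Fin n) :
    ∑ l ∈ univ.filter (fun l : Fin n => l.val < i.val), f l = ∑ l ∈ range i, f l := by
  rw [sum_filter, Fin.sum_univ_eq_sum_range (fun l => if l < i.val then f l else 0) n,
    ← sum_filter]
  congr 1
  ext l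
  have := i.isLt
  simp only [mem_filter, mem_range]
  omega

lemma regret_eq (d n : ℕ) (α : ℝ) (f : Fin d → ℕ → ℝ) :
    ∑ i : Fin n, ∑ j, f j i * (ogdIter d n α (fun i j => f j i) i j - (-1))
      = ∑ j, (∑ i ∈ range n, f j i
          - α / 2 * ((∑ i ∈ range n, f j i) ^ 2 - ∑ i ∈ range n, f j i ^ 2)) := by
  rw [sum_comm]
  refine sum_congr rfl fun j _ => ?_
  have h : ∀ i : Fin n, f j i * (ogdIter d n α (fun i j => f j i) i j - (-1))
      = f j i - α * (f j i * ∑ l ∈ range i, f j l) := by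
    intro i
    simp only [ogdIter]
    rw [sum_filter_lt (f j) n i]
    ring
  rw [sum_congr rfl fun i _ => h i,
    Fin.sum_univ_eq_sum_range (fun i => f j i - α * (f j i * ∑ l ∈ range i, f j l)) n,
    sum_sub_distrib, ← mul_sum, sum_mul_prefix]
  ring

/-- Coordinate `j` of the `i`-th hard gradient (with `i` counted from `0`): an alternating signal of
size `a` in the coordinate `j₀` during the first `2 * k` rounds, then the constant `c`. -/
noncomputable def hardGrad {d : ℕ} (k : ℕ) (j₀ : Fin d) (a c : ℝ) (j : Fin d) (i : ℕ) : ℝ :=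
  if i < 2 * k then (if j = j₀ then (-1) ^ i * a else 0) else c

lemma sum_alternating (k : ℕ) : ∑ i ∈ range (2 * k), (-1 : ℝ) ^ i = 0 := by
  induction k with
  | zero => simp
  | succ k ih =>
    rw [show 2 * (k + 1) = 2 * k + 1 + 1 by ring, sum_range_succ, sum_range_succ, ih, pow_succ]
    ring

lemma sum_hardGrad {d : ℕ} (k : ℕ) (j₀ : Fin d) (a c : ℝ) (j : Fin d) :
    ∑ i ∈ range (4 * k), hardGrad k j₀ a c j i = 2 * k * c := by
  rw [show 4 * k = 2 * k + 2 * k by ring, sum_range_add]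
  have h1 : ∑ i ∈ range (2 * k), hardGrad k j₀ a c j i = 0 := by
    have : ∀ i ∈ range (2 * k), hardGrad k j₀ a c j i
        = (-1) ^ i * (if j = j₀ then a else 0) := by
      intro i hi
      rw [mem_range] at hi
      simp [hardGrad, hi]
    rw [sum_congr rfl this, ← sum_mul, sum_alternating, zero_mul]
  rw [h1]
  simp [hardGrad]

lemma sum_hardGrad_sq {d : ℕ} (k : ℕ) (j₀ : Fin d) (a c : ℝ) (j : Fin d) :
    ∑ i ∈ range (4 * k), hardGrad k j₀ a c j i ^ 2
      = (if j = j₀ then 2 * k * a ^ 2 else 0) + 2 * k * c ^ 2 := by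
  rw [show 4 * k = 2 * k + 2 * k by ring, sum_range_add]
  have h1 : ∑ i ∈ range (2 * k), hardGrad k j₀ a c j i ^ 2
      = if j = j₀ then 2 * k * a ^ 2 else 0 := by
    have : ∀ i ∈ range (2 * k), hardGrad k j₀ a c j i ^ 2
        = if j = j₀ then a ^ 2 else 0 := by
      intro i hi
      rw [mem_range] at hi
      by_cases h : j = j₀ <;> simp [hardGrad, hi, h, mul_pow, ← pow_mul, mul_comm i 2]
    rw [sum_congr rfl this]
    by_cases h : j = j₀ <;> simp [h]
  rw [h1]
  simp [hardGrad]

lemma regret_hardGrad {d : ℕ} (k : ℕ) (j₀ : Fin d) (a c α : ℝ) (hα : 0 ≤ α) :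
    α * k * a ^ 2 + d * (2 * k * c - α / 2 * (2 * k * c) ^ 2) ≤
      ∑ i : Fin (4 * k), ∑ j, hardGrad k j₀ a c j i *
        (ogdIter d (4 * k) α (fun i j => hardGrad k j₀ a c j i) i j - (-1)) := by
  rw [regret_eq]
  simp only [sum_hardGrad, sum_hardGrad_sq]
  have h : ∀ j : Fin d, 2 * (k : ℝ) * c - α / 2 * ((2 * k * c) ^ 2
      - ((if j = j₀ then 2 * k * a ^ 2 else 0) + 2 * k * c ^ 2))
      = (2 * k * c - α / 2 * (2 * k * c) ^ 2 + α * k * c ^ 2)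
        + if j = j₀ then α * k * a ^ 2 else 0 := by
    intro j
    split_ifs <;> ring
  rw [sum_congr rfl fun j _ => h j, sum_add_distrib]
  simp only [sum_const, card_univ, Fintype.card_fin, nsmul_eq_mul, sum_ite_eq', mem_univ, if_true]
  have : 0 ≤ (d : ℝ) * (α * k * c ^ 2) := by positivity
  linarith

lemma hardGrad_budget {d : ℕ} (k : ℕ) (j₀ : Fin d) (c : ℝ) (hc : 0 ≤ c) (β : Fin d → ℝ)
    (hβ : ∀ j, 0 < β j) (hcS : c * ∑ j, β j ≤ 1) (i : ℕ) :
    ∑ j, β j * |hardGrad k j₀ (1 / β j₀) c j i| ≤ 1 := by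
  by_cases hi : i < 2 * k
  · have : ∀ j, β j * |hardGrad k j₀ (1 / β j₀) c j i| = if j = j₀ then 1 else 0 := by
      intro j
      by_cases h : j = j₀
      · subst h
        simp [hardGrad, hi, abs_mul, abs_of_pos (hβ j), (hβ j).ne']
      · simp [hardGrad, h, hi]
    rw [sum_congr rfl fun j _ => this j]
    simp
  · simp only [hardGrad, hi, if_false, abs_of_nonneg hc]
    rw [← sum_mul, mul_comm]
    exact hcS

theorem statement16 (d n : ℕ) (hd : 1 ≤ d) (hn : 1 ≤ n) (hn4 : 4 ∣ n)
    (α : ℝ) (hα : 0 ≤ α) (β : Fin d → ℝ) (hβ : ∀ j, 0 < β j) :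
    ∃ (g : Fin n → Fin d → ℝ) (θ : Fin d → ℝ),
      (∀ i, ∑ j, β j * |g i j| ≤ 1) ∧
      (∀ j, |θ j| ≤ 1) ∧
      (1 / 2) * min ((d : ℝ) * n / (2 * ∑ j, β j))
          (Real.sqrt (2 * d * n) / sInf (Set.range β)) ≤
        ∑ i : Fin n, ∑ j, g i j * (ogdIter d n α g i j - θ j) := by
  obtain ⟨k, rfl⟩ := hn4
  have : Nonempty (Fin d) := ⟨⟨0, hd⟩⟩
  obtain ⟨j₀, hj₀⟩ := (Set.range_nonempty β).csInf_mem (Set.finite_range β)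
  rw [← hj₀]
  have hk : (0 : ℝ) < k := by
    have : 0 < k := by omega
    exact_mod_cast this
  have hb := hβ j₀
  have hS : 0 < ∑ j, β j := sum_pos (fun j _ => hβ j) univ_nonempty
  set S := ∑ j, β j with hSdef
  -- It remains to choose the constant `c` of the second half.
  suffices h : ∃ c : ℝ, 0 ≤ c ∧ c * S ≤ 1 ∧
      (1 / 2) * min ((d : ℝ) * (4 * k : ℕ) / (2 * S)) (Real.sqrt (2 * d * (4 * k : ℕ)) / β j₀)
        ≤ α * k * (1 / β j₀) ^ 2 + d * (2 * k * c - α / 2 * (2 * k * c) ^ 2) by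
    obtain ⟨c, hc, hcS, hle⟩ := h
    exact ⟨fun i j => hardGrad k j₀ (1 / β j₀) c j i, fun _ => -1,
      fun i => hardGrad_budget k j₀ c hc β hβ hcS i, fun _ => by simp,
      hle.trans (regret_hardGrad k j₀ _ c α hα)⟩
  push_cast
  by_cases hcase : α * (2 * k / S) ≤ 1
  · refine ⟨1 / S, by positivity, by rw [one_div_mul_cancel hS.ne'], ?_⟩
    refine (mul_le_mul_of_nonneg_left (min_le_left _ _) (by norm_num)).trans ?_
    have e : (1 / 2 : ℝ) * (d * (4 * k) / (2 * S)) = d * (2 * k / S / 2) := by ring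
    rw [e, show 2 * (k : ℝ) * (1 / S) = 2 * k / S by ring]
    have hx : 0 < 2 * k / S := by positivity
    have h1 : 2 * k / S / 2 ≤ 2 * k / S - α / 2 * (2 * k / S) ^ 2 := by nlinarith
    have h2 := mul_le_mul_of_nonneg_left h1 (Nat.cast_nonneg (α := ℝ) d)
    have h3 : 0 ≤ α * k * (1 / β j₀) ^ 2 := by positivity
    linarith
  · push Not at hcase
    have hα' : 0 < α := by
      rcases hα.eq_or_lt with h | h
      · rw [← h] at hcase; norm_num at hcase
      · exact h
    refine ⟨1 / (2 * k * α), by positivity, ?_, ?_⟩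
    · rw [one_div_mul_eq_div, div_le_one (by positivity)]
      rw [← mul_div_assoc, lt_div_iff₀ hS] at hcase
      linarith
    · refine (mul_le_mul_of_nonneg_left (min_le_right _ _) (by norm_num)).trans ?_
      have e : 2 * (k : ℝ) * (1 / (2 * k * α)) = 1 / α := by field_simp
      rw [e]
      -- AM-GM, in the form `s ≤ p + q` whenever `s² = 4 p q`.
      have hs := Real.sq_sqrt (show (0 : ℝ) ≤ 2 * d * (4 * k) by positivity)
      refine abs_le_of_sq_le_sq' ?_ ?_ |>.2
      · have e1 : (1 / 2 * (√(2 * d * (4 * k)) / β j₀)) ^ 2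
            = 4 * (α * k * (1 / β j₀) ^ 2) * (d / (2 * α)) := by
          rw [mul_pow, div_pow (√_), hs]; field_simp
        have e2 : (d : ℝ) * (1 / α - α / 2 * (1 / α) ^ 2) = d / (2 * α) := by
          field_simp; ring
        rw [e1, e2]
        nlinarith [sq_nonneg (α * k * (1 / β j₀) ^ 2 - d / (2 * α))]
      · have e2 : (d : ℝ) * (1 / α - α / 2 * (1 / α) ^ 2) = d / (2 * α) := by
          field_simp; ring
        rw [e2]; positivity
end

section
/- Let (𝒳, Σ) be a measurable space, n ≥ 1, 𝒱 a finite set with |𝒱| ≥ 2, and (P_v)_{v∈𝒱} probability measures on 𝒳. Let (T, Σ_T) be a measurable space and L : T × 𝒱 → [0,∞) be such that t ↦ L(t,v) is measurable for each v ∈ 𝒱. Suppose δ > 0 is such that for all v ≠ v' in 𝒱 and all t ∈ T: if L(t,v) ≤ δ then L(t,v') ≥ δ. Then for every measurable θ̂ : 𝒳ⁿ → T, (1/|𝒱|) Σ_{v∈𝒱} ∫ L(θ̂(x), v) dP_vⁿ(x) ≥ δ · inf over measurable tests ψ : 𝒳ⁿ → 𝒱 of (1/|𝒱|) Σ_{v∈𝒱}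 P_vⁿ({x : ψ(x) ≠ v}). -/
/-!
The separation hypothesis implies that at each `t` at most one index `v` has `L t v < δ`. Hence
picking the `v` with `L t v < δ`, or a fixed default if there is none, is a well-defined test on `T`
(`exists_measurable_test`), and whenever it differs from `v` one has `δ ≤ L t v`. Composing it
with the estimator gives a test whose error under each `P_vⁿ` is bounded by Markov's inequality:
`δ * P_vⁿ {ψ ≠ v} ≤ δ * P_vⁿ {δ ≤ L (est x) v} ≤ ∫⁻ L (est x) v`. Averaging over `v` concludes.
-/

open MeasureTheory
open scoped ENNReal

/-- The test induced by a separated loss. It is measurable for any σ-algebra on `V`, since the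
preimage of every subset of `V` is measurable. -/
lemma exists_measurable_test {V T : Type*} [Finite V] [Nonempty V] [MeasurableSpace V]
    [MeasurableSpace T] (L : T → V → ℝ) (hLmeas : ∀ v, Measurable fun t => L t v) (δ : ℝ)
    (hsep : ∀ v v', v ≠ v' → ∀ t, L t v ≤ δ → δ ≤ L t v') :
    ∃ φ : T → V, Measurable φ ∧ ∀ t v, φ t ≠ v → δ ≤ L t v := by
  classical
  obtain ⟨v₀⟩ := ‹Nonempty V›
  let φ : T → V := fun t => if h : ∃ v, L t v < δ then h.choose else v₀
  have hφ : ∀ t v, L t v < δ → φ t = v := by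
    intro t v hv
    have h : ∃ v, L t v < δ := ⟨v, hv⟩
    have hc : φ t = h.choose := dif_pos h
    rw [hc]
    by_contra hne
    exact absurd (hsep _ _ hne t h.choose_spec.le) (not_le.mpr hv)
  have hφ₀ : ∀ t, (∀ v, δ ≤ L t v) → φ t = v₀ := fun t h =>
    dif_neg (by push Not; exact h)
  refine ⟨φ, fun s _ => ?_, fun t v hne => ?_⟩
  · have hs : φ ⁻¹' s =
        (⋃ v ∈ s, {t | L t v < δ}) ∪ ({_t : T | v₀ ∈ s} ∩ ⋂ v, {t | δ ≤ L t v}) := by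
      ext t
      simp only [Set.mem_preimage, Set.mem_union, Set.mem_iUnion, Set.mem_inter_iff,
        Set.mem_iInter, Set.mem_ofPred_eq, exists_prop]
      by_cases h : ∃ v, L t v < δ
      · obtain ⟨v, hv⟩ := h
        rw [hφ t v hv]
        constructor
        · exact fun hvs => Or.inl ⟨v, hvs, hv⟩
        · rintro (⟨w, hw, hwt⟩ | ⟨-, hall⟩)
          · rwa [← hφ t v hv, hφ t w hwt]
          · exact absurd (hall v) (not_le.mpr hv)
      · push Not at h
        rw [hφ₀ t h]
        constructor
        · exact fun hv => Or.inr ⟨hv, h⟩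
        · rintro (⟨w, -, hwt⟩ | ⟨hv, -⟩)
          · exact absurd (h w) (not_le.mpr hwt)
          · exact hv
    rw [hs]
    refine MeasurableSet.union ?_ (MeasurableSet.inter (MeasurableSet.const _) ?_)
    · exact MeasurableSet.biUnion (Set.to_countable s)
        fun v _ => measurableSet_lt (hLmeas v) measurable_const
    · exact MeasurableSet.iInter fun v => measurableSet_le measurable_const (hLmeas v)
  · by_contra hlt
    exact hne (hφ t v (not_le.mp hlt))

theorem statement18 {X : Type*} [MeasurableSpace X] (n : ℕ) (hn : 1 ≤ n)
    {V : Type*} [Fintype V] [MeasurableSpace V] (hV : 2 ≤ Fintype.card V)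
    (P : V → Measure X) (hP : ∀ v, IsProbabilityMeasure (P v))
    {T : Type*} [MeasurableSpace T]
    (L : T → V → ℝ) (hL0 : ∀ t v, 0 ≤ L t v)
    (hLmeas : ∀ v, Measurable fun t => L t v)
    (δ : ℝ) (hδ : 0 < δ)
    (hsep : ∀ v v', v ≠ v' → ∀ t, L t v ≤ δ → δ ≤ L t v')
    (est : (Fin n → X) → T) (hest : Measurable est) :
    ENNReal.ofReal δ *
        ⨅ ψ : {ψ : (Fin n → X) → V // Measurable ψ},
          (1 / (Fintype.card V : ℝ≥0∞)) *
            ∑ v, (Measure.pi fun _ : Fin n => P v) {x | ψ.1 x ≠ v} ≤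
      (1 / (Fintype.card V : ℝ≥0∞)) *
        ∑ v, ∫⁻ x, ENNReal.ofReal (L (est x) v)
          ∂(Measure.pi fun _ : Fin n => P v) := by
  have hne : Nonempty V := Fintype.card_pos_iff.mp (by omega)
  obtain ⟨φ, hφm, hφ⟩ := exists_measurable_test L hLmeas δ hsep
  refine (mul_le_mul_right (iInf_le _ ⟨fun x => φ (est x), hφm.comp hest⟩) _).trans ?_
  rw [mul_left_comm, Finset.mul_sum]
  refine mul_le_mul_right (Finset.sum_le_sum fun v _ => ?_) _
  refine le_trans (mul_le_mul_right (measure_mono ?_) _)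
    (mul_meas_ge_le_lintegral ((hLmeas v).comp hest).ennreal_ofReal (ENNReal.ofReal δ))
  exact fun x hx => ENNReal.ofReal_le_ofReal (hφ _ _ hx)
end

section
/- Let (𝒳, Σ) be a measurable space, n ≥ 1, 𝒱 a finite set with |𝒱| ≥ 2, and (P_v)_{v∈𝒱} probability measures on 𝒳. Let Θ ⊆ ℝ^d be nonempty and F : ℝ^d × 𝒳 → ℝ be such that F(θ,·) is measurable and P_v-integrable for every θ ∈ ℝ^d and v ∈ 𝒱. Define f_v(θ) = ∫ F(θ,x) dP_v(x), and assume inf_{θ∈Θ} f_v(θ) is finite for each v. Suppose δ ≥ 0 satisfies: for all v ≠ v' in 𝒱, inf_{θ∈Θ} [f_v(θ) + f_{v'}(θ)] − inf_{θ∈Θ} f_v(θ) − inf_{θ∈Θ} f_{v'}(θ) ≥ δ. Then for every map θ̂ : 𝒳ⁿ → Θ such that x ↦ f_v(θ̂(x)) is measurable for each v, (1/|𝒱|) Σ_{v∈𝒱} ∫ [ f_v(θ̂(x)) − inf_{θ∈Θ} f_v(θ) ] dP_vⁿ(x) ≥ (δ/2) · inf over measurable tests ψ : 𝒳ⁿ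 → 𝒱 of (1/|𝒱|) Σ_{v∈𝒱} P_vⁿ({x : ψ(x) ≠ v}). -/
/-!
Estimation is reduced to testing. Write `g v x` for the excess risk `f_v(θ̂(x)) - inf_Θ f_v`. The
separation hypothesis gives `δ ≤ g v x + g w x` for `v ≠ w`, so at each sample `x` at most one index
`v` has `g v x < δ / 2`. The test `ψ` returning that index (and an arbitrary fixed one if there is
none) errs at `v` only where `δ / 2 ≤ g v`, and Markov's inequality bounds the probability of that
event under `P_vⁿ`. Summing over `v` gives the claim.
-/

open MeasureTheory
open scoped ENNReal

theorem statement19 {X : Type*} [MeasurableSpace X] (n d : ℕ) (hn : 1 ≤ n)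
    {V : Type*} [Fintype V] [MeasurableSpace V] (hV : 2 ≤ Fintype.card V)
    (P : V → Measure X) (hP : ∀ v, IsProbabilityMeasure (P v))
    (Θ : Set (Fin d → ℝ)) (hΘ : Θ.Nonempty)
    (F : (Fin d → ℝ) → X → ℝ)
    (hFint : ∀ (θ : Fin d → ℝ) (v : V), Integrable (fun x => F θ x) (P v))
    (hbdd : ∀ v, BddBelow ((fun θ => ∫ x, F θ x ∂(P v)) '' Θ))
    (δ : ℝ) (hδ : 0 ≤ δ)
    (hsep : ∀ v v', v ≠ v' →
      δ ≤ sInf ((fun θ => (∫ x, F θ x ∂(P v)) + ∫ x, F θ x ∂(P v')) '' Θ)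
            - sInf ((fun θ => ∫ x, F θ x ∂(P v)) '' Θ)
            - sInf ((fun θ => ∫ x, F θ x ∂(P v')) '' Θ))
    (est : (Fin n → X) → (Fin d → ℝ)) (hest : ∀ x, est x ∈ Θ)
    (hestmeas : ∀ v, Measurable fun xs : Fin n → X => ∫ y, F (est xs) y ∂(P v)) :
    ENNReal.ofReal (δ / 2) *
        ⨅ ψ : {ψ : (Fin n → X) → V // Measurable ψ},
          (1 / (Fintype.card V : ℝ≥0∞)) *
            ∑ v, (Measure.pi fun _ : Fin n => P v) {x | ψ.1 x ≠ v} ≤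
      (1 / (Fintype.card V : ℝ≥0∞)) *
        ∑ v, ∫⁻ xs, ENNReal.ofReal ((∫ y, F (est xs) y ∂(P v)) -
            sInf ((fun θ => ∫ x, F θ x ∂(P v)) '' Θ))
          ∂(Measure.pi fun _ : Fin n => P v) := by
  classical
  haveI : Nonempty V := Fintype.card_pos_iff.mp (by omega)
  set g : V → (Fin n → X) → ℝ := fun v xs => (∫ y, F (est xs) y ∂(P v)) -
    sInf ((fun θ => ∫ x, F θ x ∂(P v)) '' Θ) with hg
  have hgm : ∀ v, Measurable (g v) := fun v => (hestmeas v).sub_const _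
  have hsum : ∀ v w, v ≠ w → ∀ xs, δ ≤ g v xs + g w xs := by
    intro v w hvw xs
    have hb : BddBelow ((fun θ => (∫ x, F θ x ∂(P v)) + ∫ x, F θ x ∂(P w)) '' Θ) := by
      obtain ⟨a, ha⟩ := hbdd v
      obtain ⟨b, hb⟩ := hbdd w
      refine ⟨a + b, ?_⟩
      rintro _ ⟨θ, hθ, rfl⟩
      exact add_le_add (ha ⟨θ, hθ, rfl⟩) (hb ⟨θ, hθ, rfl⟩)
    have h1 := csInf_le hb ⟨est xs, hest xs, rfl⟩
    have h2 := hsep v w hvw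
    simp only [hg] at h1 h2 ⊢
    linarith
  -- The test factors through the finite discrete space `V → Prop`, which makes it measurable
  -- whatever the σ-algebra on `V`.
  let G : (V → Prop) → V := fun s => if h : ∃ v, s v then h.choose else Classical.arbitrary V
  let ψ : (Fin n → X) → V := fun xs => G fun v => g v xs < δ / 2
  have hψ : Measurable ψ := by
    have hG : Measurable G := Measurable.of_discrete
    refine hG.comp (measurable_pi_lambda _ fun v => ?_)
    exact measurableSet_setOf.mp (measurableSet_lt (hgm v) measurable_const)
  have herr : ∀ v xs, ψ xs ≠ v → δ / 2 ≤ g v xs := by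
    intro v xs hne
    by_contra! hlt
    have hex : ∃ v, g v xs < δ / 2 := ⟨v, hlt⟩
    have hψx : ψ xs = hex.choose := dif_pos hex
    have hc : g (ψ xs) xs < δ / 2 := hψx ▸ hex.choose_spec
    linarith [hsum _ _ hne xs]
  have hmarkov : ∀ v, ENNReal.ofReal (δ / 2) * (Measure.pi fun _ : Fin n => P v) {x | ψ x ≠ v} ≤
      ∫⁻ xs, ENNReal.ofReal (g v xs) ∂(Measure.pi fun _ : Fin n => P v) := by
    intro v
    refine le_trans ?_ (mul_meas_ge_le_lintegral (hgm v).ennreal_ofReal (ENNReal.ofReal (δ / 2)))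
    gcongr
    exact fun h => ENNReal.ofReal_le_ofReal (herr _ _ h)
  refine (mul_le_mul_right (iInf_le _ ⟨ψ, hψ⟩) _).trans ?_
  rw [mul_left_comm, Finset.mul_sum]
  gcongr with v
  exact hmarkov v
end
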